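/- Let (ρ,σ) be a direction, let R₀ ∈ K[x,y] be a nonzero (ρ,σ)-homogeneous polynomial, let m, k be positive integers with m > 1 and m ∣ k, and set R := R₀^{k/m}. Assume there exist a (ρ,σ)-homogeneous polynomial H ∈ K[x,y], an integer s ≥ 1 and μ ∈ K∖{0} such that [H, R^m] = μ·R₀^s. Then there exist a (ρ,σ)-homogeneous polynomial G₁ ∈ K[x,y] and an integer i ≥ 0 such that [G₁, R] = R^i. -/

import Mathlib

open MvPolynomial

noncomputable section

variable {K : Type*} [Field K] [CharZero K]

/-- The support of `P` as a set of pairs `(i,j)` of exponents of `x^i y^j`. -/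
def Supp (P : MvPolynomial (Fin 2) K) : Set (ℕ × ℕ) :=
  {p | MvPolynomial.coeff (Finsupp.single 0 p.1 + Finsupp.single 1 p.2) P ≠ 0}

/-- The Jacobian bracket `[P,Q] = ∂ₓP ∂_yQ − ∂ₓQ ∂_yP`. -/
def Jb (P Q : MvPolynomial (Fin 2) K) : MvPolynomial (Fin 2) K :=
  pderiv 0 P * pderiv 1 Q - pderiv 0 Q * pderiv 1 P

/-- The `(ρ,σ)`-degree `v_{ρ,σ}(P)` (the maximum of `ρi+σj` on the support). -/
def wdeg (ρ σ : ℤ) (P : MvPolynomial (Fin 2) K) : ℤ :=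
  sSup {d : ℤ | ∃ p ∈ Supp P, d = ρ * (p.1 : ℤ) + σ * (p.2 : ℤ)}

/-- The support of the `(ρ,σ)`-leading form of `P`. -/
def LeadSupp (ρ σ : ℤ) (P : MvPolynomial (Fin 2) K) : Set (ℕ × ℕ) :=
  {p | p ∈ Supp P ∧ ρ * (p.1 : ℤ) + σ * (p.2 : ℤ) = wdeg ρ σ P}

/-- `P` is `(ρ,σ)`-homogeneous. -/
def IsHomog (ρ σ : ℤ) (P : MvPolynomial (Fin 2) K) : Prop :=
  ∀ p ∈ Supp P, ∀ q ∈ Supp P,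
    ρ * (p.1 : ℤ) + σ * (p.2 : ℤ) = ρ * (q.1 : ℤ) + σ * (q.2 : ℤ)

/-- `P` is a monomial: its support has at most one point. -/
def IsMonomial (P : MvPolynomial (Fin 2) K) : Prop := (Supp P).Subsingleton

/-- `e` is the point `en_{ρ,σ}(P)`: the point of the support of the leading form
with largest second coordinate. -/
def IsEn (ρ σ : ℤ) (P : MvPolynomial (Fin 2) K) (e : ℕ × ℕ) : Prop :=
  e ∈ LeadSupp ρ σ P ∧ ∀ q ∈ LeadSupp ρ σ P, q.2 ≤ e.2

/-- `e` is the point `st_{ρ,σ}(P)`: the point of the support of the leading form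
with smallest second coordinate. -/
def IsSt (ρ σ : ℤ) (P : MvPolynomial (Fin 2) K) (e : ℕ × ℕ) : Prop :=
  e ∈ LeadSupp ρ σ P ∧ ∀ q ∈ LeadSupp ρ σ P, e.2 ≤ q.2

/-!
The bracket is a derivation in each argument, so `P * [H, P ^ n] = n * P ^ n * [H, P]`, and
`[H, P ^ n] = μ * P ^ s` becomes `n * P ^ n * [H, P] = μ * P ^ (s + 1)`. Powers of `P` have zero
bracket with each other, so `[P ^ t * H, P ^ e] = e * P ^ (t + e - 1) * [H, P]`. For
`t = (e - 1) * s + n` this equals `e * P ^ ((e - 1) * (s + 1)) * (P ^ n * [H, P])`, and multiplying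
it by `n / (e * μ)` gives `P ^ (e * (s + 1))`, a power of `P ^ e`.
-/

section Bracket

variable {F : Type*} [Field F] (P Q H : MvPolynomial (Fin 2) F)

theorem Jb_self : Jb P P = 0 :=
  sub_self _

theorem Jb_swap : Jb Q P = -Jb P Q := by
  unfold Jb
  ring

theorem Jb_mul_left : Jb (P * Q) H = P * Jb Q H + Q * Jb P H := by
  simp only [Jb, Derivation.leibniz, smul_eq_mul]
  ring

theorem Jb_C_mul_left (c : F) : Jb (C c * P) Q = C c * Jb P Q := by
  simp only [Jb, pderiv_C_mul]
  ring

theorem Jb_pow_right (n : ℕ) : Jb P (Q ^ n) = C (n : F) * Q ^ (n - 1) * Jb P Q := by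
  simp only [Jb, Derivation.leibniz_pow, nsmul_eq_mul, smul_eq_mul, map_natCast]
  ring

theorem mul_Jb_pow_right (n : ℕ) : Q * Jb P (Q ^ n) = C (n : F) * Q ^ n * Jb P Q := by
  rcases eq_or_ne n 0 with rfl | hn
  · simp only [Jb_pow_right, Nat.cast_zero, C_0, zero_mul, mul_zero]
  · rw [Jb_pow_right, ← mul_pow_sub_one hn Q]
    ring

theorem Jb_pow_pow_self (m n : ℕ) : Jb (P ^ m) (P ^ n) = 0 := by
  rw [Jb_pow_right, Jb_swap, Jb_pow_right, Jb_self, mul_zero, neg_zero, mul_zero]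

theorem Jb_pow_mul_pow (t e : ℕ) : Jb (P ^ t * H) (P ^ e) = P ^ t * Jb H (P ^ e) := by
  rw [Jb_mul_left, Jb_pow_pow_self, mul_zero, add_zero]

end Bracket

theorem Jb_C_mul_pow_mul_eq_pow {F : Type*} [Field F]
    {P H : MvPolynomial (Fin 2) F} {e n s : ℕ} {μ : F} (he : (e : F) ≠ 0) (hμ : μ ≠ 0)
    (h : Jb H (P ^ n) = C μ * P ^ s) :
    Jb (C (μ⁻¹ * n / e) * (P ^ ((e - 1) * s + n) * H)) (P ^ e) = (P ^ e) ^ (s + 1) := by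
  have hJ : C (n : F) * P ^ n * Jb H P = C μ * P ^ (s + 1) := by
    rw [← mul_Jb_pow_right, h]
    ring
  obtain ⟨d, rfl⟩ : ∃ d, e = d + 1 :=
    Nat.exists_eq_succ_of_ne_zero fun h₀ ↦ he (by rw [h₀, Nat.cast_zero])
  rw [Nat.add_sub_cancel]
  calc Jb (C (μ⁻¹ * n / (d + 1 : ℕ)) * (P ^ (d * s + n) * H)) (P ^ (d + 1))
      = C (μ⁻¹ * n / (d + 1 : ℕ) * (d + 1 : ℕ)) * P ^ (d * s + n + d) * Jb H P := by
        rw [Jb_C_mul_left, Jb_pow_mul_pow, Jb_pow_right, C_mul, Nat.add_sub_cancel]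
        ring
    _ = C μ⁻¹ * P ^ (d * s + d) * (C (n : F) * P ^ n * Jb H P) := by
        rw [div_mul_cancel₀ _ he, C_mul]
        ring
    _ = C (μ⁻¹ * μ) * (P ^ (d + 1)) ^ (s + 1) := by
        rw [hJ, C_mul]
        ring
    _ = (P ^ (d + 1)) ^ (s + 1) := by
        rw [inv_mul_cancel₀ hμ, C_1, one_mul]

section Homogeneity

variable {F : Type*} [Field F] {ρ σ : ℤ} {P Q : MvPolynomial (Fin 2) F}

theorem mk_mem_Supp_iff (u : Fin 2 →₀ ℕ) : (u 0, u 1) ∈ Supp P ↔ coeff u P ≠ 0 := by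
  have hu : Finsupp.single 0 (u 0) + Finsupp.single 1 (u 1) = u := by
    ext i
    fin_cases i <;> simp
  simp only [Supp, Set.mem_ofPred_eq, hu]

theorem isHomog_iff_exists_isWeightedHomogeneous :
    IsHomog ρ σ P ↔ ∃ d, IsWeightedHomogeneous ![ρ, σ] P d := by
  have weight_eq (u : Fin 2 →₀ ℕ) : Finsupp.weight ![ρ, σ] u = ρ * u 0 + σ * u 1 := by
    simp [Finsupp.weight_eq_sum, mul_comm]
  constructor
  · intro hP
    rcases eq_or_ne P 0 with rfl | hP₀
    · exact ⟨0, isWeightedHomogeneous_zero F _ 0⟩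
    · obtain ⟨v, hv⟩ := ne_zero_iff.mp hP₀
      refine ⟨ρ * v 0 + σ * v 1, fun u hu ↦ ?_⟩
      rw [weight_eq]
      exact hP _ ((mk_mem_Supp_iff u).mpr hu) _ ((mk_mem_Supp_iff v).mpr hv)
  · rintro ⟨d, hd⟩
    have degree_eq (p : ℕ × ℕ) (hp : p ∈ Supp P) : ρ * (p.1 : ℤ) + σ * (p.2 : ℤ) = d := by
      rw [← hd hp, weight_eq]
      simp
    intro p hp q hq
    rw [degree_eq p hp, degree_eq q hq]

theorem isHomog_C (c : F) : IsHomog ρ σ (C c) :=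
  isHomog_iff_exists_isWeightedHomogeneous.mpr ⟨0, isWeightedHomogeneous_C _ c⟩

theorem IsHomog.mul (hP : IsHomog ρ σ P) (hQ : IsHomog ρ σ Q) : IsHomog ρ σ (P * Q) := by
  rw [isHomog_iff_exists_isWeightedHomogeneous] at *
  obtain ⟨a, ha⟩ := hP
  obtain ⟨b, hb⟩ := hQ
  exact ⟨a + b, ha.mul hb⟩

theorem IsHomog.pow (hP : IsHomog ρ σ P) (n : ℕ) : IsHomog ρ σ (P ^ n) := by
  rw [isHomog_iff_exists_isWeightedHomogeneous] at *
  obtain ⟨a, ha⟩ := hP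
  exact ⟨n • a, ha.pow n⟩

end Homogeneity

theorem stmt4_general {F : Type*} [Field F] {ρ σ : ℤ} {R₀ H : MvPolynomial (Fin 2) F}
    (hhomR₀ : IsHomog ρ σ R₀) (hhomH : IsHomog ρ σ H) {e n s : ℕ} (he : (e : F) ≠ 0)
    {μ : F} (hμ : μ ≠ 0) (hbr : Jb H (R₀ ^ n) = C μ * R₀ ^ s) :
    ∃ (G₁ : MvPolynomial (Fin 2) F) (i : ℕ), IsHomog ρ σ G₁ ∧ Jb G₁ (R₀ ^ e) = (R₀ ^ e) ^ i :=
  ⟨_, s + 1, (isHomog_C _).mul ((hhomR₀.pow _).mul hhomH), Jb_C_mul_pow_mul_eq_pow he hμ hbr⟩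

/-- If `R₀` is a nonzero `(ρ,σ)`-homogeneous polynomial, `m>1`, `m ∣ k`,
`R = R₀^(k/m)`, and `[H, R^m] = μ·R₀^s` for a `(ρ,σ)`-homogeneous `H`, `s ≥ 1` and
`μ ≠ 0`, then there are a `(ρ,σ)`-homogeneous `G₁` and `i ≥ 0` with `[G₁,R]=R^i`. -/
theorem stmt4 (K : Type*) [Field K] [CharZero K]
    (ρ σ : ℤ) (hgcd : Int.gcd ρ σ = 1)
    (R₀ : MvPolynomial (Fin 2) K) (hR₀ : R₀ ≠ 0) (hhomR₀ : IsHomog ρ σ R₀)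
    (m k : ℕ) (hm : 1 < m) (hk : 1 ≤ k) (hdvd : m ∣ k)
    (H : MvPolynomial (Fin 2) K) (hhomH : IsHomog ρ σ H)
    (s : ℕ) (hs : 1 ≤ s) (μ : K) (hμ : μ ≠ 0)
    (hbr : Jb H ((R₀ ^ (k / m)) ^ m) = MvPolynomial.C μ * R₀ ^ s) :
    ∃ (G₁ : MvPolynomial (Fin 2) K) (i : ℕ), IsHomog ρ σ G₁ ∧
      Jb G₁ (R₀ ^ (k / m)) = (R₀ ^ (k / m)) ^ i := by
  have he : ((k / m : ℕ) : K) ≠ 0 :=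
    Nat.cast_ne_zero.mpr (Nat.div_pos (Nat.le_of_dvd hk hdvd) (by lia)).ne'
  exact stmt4_general hhomR₀ hhomH he hμ (pow_mul R₀ (k / m) m ▸ hbr)

end
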